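/- Every standard graded Artinian Gorenstein ℂ-algebra A = ⊕_{i=0}^d A_i with dim_ℂ A_1 ≤ 4 and socle degree d ∈ {3, 4} has the Strong Lefschetz Property. -/

import Mathlib

open Module

/-!
Write `V = A_1`. Everything reduces to one `L ∈ V` with `L ^ d ≠ 0` and `L ^ (d - 2)` injective on
`V`: the other maps are then injective or surjective because `A_0` and `A_d` are lines and because
`A_1` and `A_(d-1)` are dual. The existence of `L` is the theorem of Gordan and Noether for forms
of degree `3` and `4` in at most four variables: a form that is not a cone has nonzero Hessian.

Call `L` general if `L ^ d ≠ 0` and `L ^ (d - 2)` has the largest possible rank on `V`. A vector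
`x` in the kernel of `L ^ (d - 2)` then extends, for every direction `M`, to a polynomial curve
`p(t) = x + t y + t² z + …` in `V` with `(L + t M) ^ (d - 2) p(t) = 0`, given by Cramer's rule
(`exists_kernel_curve`), and any identity valid for all general `L` and their kernel vectors holds
identically along the curve. Comparing coefficients gives relations in `A`.

* For `d = 3` the kernel squares to zero, hence so does `p`. If `x ≠ 0`, choose `M` with
  `M ^ 2 x ≠ 0`; the relations force `x, y, L, M, z` to be linearly independent, which is
  impossible in dimension at most four (`lefKer_eq_bot_three`).
* For `d = 4` the first-order relations are `L x² = 0` and `x³ = 0`. If `x² ≠ 0`, five independent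
  vectors arise (`four_sq_eq_zero`), so `x² = 0` and `p² = 0`. If `L x ≠ 0`, choose `M` with
  `M ^ 2 L x ≠ 0`; again `x, y, L, M, z` are independent. So `L x = 0` for all general `L`, and
  differentiating gives `M x = 0` for all `M`, whence `x = 0` (`lefKer_eq_bot_four`).
-/

/-! ### Kernel curves of general elements -/

section Curves
variable {A : Type*} [CommRing A] [Algebra ℂ A]
open Polynomial

/-- Coefficientwise application of a linear functional to a polynomial over `A`. -/
noncomputable def applyCoeff (g : A →ₗ[ℂ] ℂ) (q : A[X]) : ℂ[X] :=
  ∑ i ∈ q.support, monomial i (g (q.coeff i))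

lemma applyCoeff_coeff (g : A →ₗ[ℂ] ℂ) (q : A[X]) (i : ℕ) :
    (applyCoeff g q).coeff i = g (q.coeff i) := by
  simp only [applyCoeff, finsetSum_coeff, coeff_monomial, Finset.sum_ite_eq']
  split_ifs with h
  · rfl
  · simp [Polynomial.notMem_support_iff.1 h]

lemma applyCoeff_eval (g : A →ₗ[ℂ] ℂ) (q : A[X]) (t : ℂ) :
    (applyCoeff g q).eval t = g (q.eval (algebraMap ℂ A t)) := by
  rw [eval_eq_sum (p := q), Polynomial.sum, map_sum, applyCoeff, eval_finsetSum]
  refine Finset.sum_congr rfl fun i _ => ?_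
  rw [eval_monomial, ← map_pow, mul_comm (q.coeff i), ← Algebra.smul_def, map_smul, smul_eq_mul,
    mul_comm]

/-- A polynomial over `A` that vanishes at all complex scalars outside the zeros of a nonzero
complex polynomial is zero. -/
lemma eq_zero_of_generic (q : A[X]) (b : ℂ[X]) (hb : b ≠ 0)
    (h : ∀ t : ℂ, b.eval t ≠ 0 → q.eval (algebraMap ℂ A t) = 0) : q = 0 := by
  ext i
  rw [coeff_zero]
  refine (Module.forall_dual_apply_eq_zero_iff ℂ (q.coeff i)).1 fun g => ?_
  have : b * applyCoeff g q = 0 := by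
    refine Polynomial.funext fun t => ?_
    rw [eval_mul, applyCoeff_eval, eval_zero]
    by_cases hbt : b.eval t = 0
    · simp [hbt]
    · simp [h t hbt]
  rw [← applyCoeff_coeff, (mul_eq_zero.1 this).resolve_left hb, coeff_zero]

/-- The elements of `V` annihilated by `L ^ m`; below, `V` is the degree one part. -/
noncomputable def lefKer (V : Submodule ℂ A) (m : ℕ) (L : A) : Submodule ℂ A :=
  V ⊓ LinearMap.ker (LinearMap.mulLeft ℂ (L ^ m))

lemma mem_lefKer {V : Submodule ℂ A} {m : ℕ} {L x : A} :
    x ∈ lefKer V m L ↔ x ∈ V ∧ L ^ m * x = 0 := by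
  simp [lefKer]

/-- `L` is general: `L ^ d ≠ 0` and, subject to this, multiplication by `L ^ m` on `V` has the
largest possible rank. -/
def IsGeneral (V : Submodule ℂ A) (d m : ℕ) (L : A) : Prop :=
  L ∈ V ∧ L ^ d ≠ 0 ∧
    ∀ L' ∈ V, L' ^ d ≠ 0 → finrank ℂ (lefKer V m L) ≤ finrank ℂ (lefKer V m L')

/-- A kernel vector `x` of a general `L` extends to a polynomial curve `p` of kernel vectors of
`L + t M`. The last clause transfers identities: a polynomial `E` vanishing at every `t` for which
`L + t M` is general and `p(t)` is a kernel vector is zero, as this holds for almost all `t`. -/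
lemma exists_kernel_curve [FiniteDimensional ℂ A] {V : Submodule ℂ A} {d m : ℕ} {L M x : A}
    (hL : IsGeneral V d m L) (hM : M ∈ V) (hx : x ∈ lefKer V m L) :
    ∃ p : A[X], (∀ i, p.coeff i ∈ V) ∧ p.coeff 0 = x ∧ (C L + X * C M) ^ m * p = 0 ∧
      ∀ E : A[X], (∀ t : ℂ, IsGeneral V d m (L + algebraMap ℂ A t * M) →
        p.eval (algebraMap ℂ A t) ∈ lefKer V m (L + algebraMap ℂ A t * M) →
        E.eval (algebraMap ℂ A t) = 0) → E = 0 := by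
  obtain ⟨hLV, hLd, hmin⟩ := hL
  obtain ⟨hxV, hx0⟩ := mem_lefKer.1 hx
  obtain ⟨W, hdisj, hsup⟩ := IsModularLattice.exists_disjoint_and_sup_eq
    (show lefKer V m L ≤ V from inf_le_left)
  have hWV : W ≤ V := hsup ▸ le_sup_right
  let r := finrank ℂ W
  let w : Basis (Fin r) ℂ W := finBasis ℂ W
  -- `R` is a left inverse of `L ^ m` on the complement `W` of the kernel
  obtain ⟨R, hR⟩ := LinearMap.exists_leftInverse_of_injective
    ((LinearMap.mulLeft ℂ (L ^ m)).comp W.subtype) (by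
      rw [LinearMap.ker_eq_bot']
      intro y hy
      have h1 : (y : A) ∈ lefKer V m L := mem_lefKer.2 ⟨hWV y.2, by simpa using hy⟩
      exact Subtype.ext (Submodule.disjoint_def.1 hdisj _ h1 y.2))
  let g : Fin r → A →ₗ[ℂ] ℂ := fun j => (w.coord j).comp R
  have hg : ∀ i j, g j (L ^ m * (w i : A)) = if i = j then 1 else 0 := by
    intro i j
    have := LinearMap.congr_fun hR (w i)
    simp only [LinearMap.comp_apply, LinearMap.mulLeft_apply, Submodule.subtype_apply,
      LinearMap.id_apply] at this
    simp [g, this, Finsupp.single_apply]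
  let Lt : A[X] := C L + X * C M
  have hLt : ∀ t : ℂ, Lt.eval (algebraMap ℂ A t) = L + algebraMap ℂ A t * M := by
    intro t; simp only [Lt, eval_add, eval_mul, eval_C, eval_X]
  -- `S` is `R ∘ (L + t M) ^ m` on `W`; it is the identity at `t = 0`, and its adjugate projects
  -- `x` along `W` into the kernel of `R ∘ (L + t M) ^ m`
  let S : Matrix (Fin r) (Fin r) ℂ[X] := fun j i => applyCoeff (g j) (Lt ^ m * C (w i : A))
  let v : Fin r → ℂ[X] := fun j => applyCoeff (g j) (Lt ^ m * C x)
  let u : Fin r → ℂ[X] := S.adjugate.mulVec v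
  let φ : ℂ[X] → A[X] := Polynomial.map (algebraMap ℂ A)
  let p : A[X] := φ S.det * C x - ∑ i, φ (u i) * C (w i : A)
  have hφ : ∀ q t, (φ q).eval (algebraMap ℂ A t) = algebraMap ℂ A (q.eval t) := by
    intro q t; simp [φ, eval_map, eval₂_at_apply]
  have hS : ∀ t j i, (S j i).eval t = g j ((L + algebraMap ℂ A t * M) ^ m * (w i : A)) := by
    intro t j i
    simp [S, applyCoeff_eval, hLt]
  have hv : ∀ t j, (v j).eval t = g j ((L + algebraMap ℂ A t * M) ^ m * x) := by
    intro t j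
    simp [v, applyCoeff_eval, hLt]
  have hp : ∀ t, p.eval (algebraMap ℂ A t) =
      S.det.eval t • x - ∑ i, (u i).eval t • (w i : A) := by
    intro t
    simp [p, eval_finsetSum, hφ, Algebra.smul_def]
  have hdet0 : S.det.eval 0 = 1 := by
    have : (evalRingHom (0 : ℂ)).mapMatrix S = 1 := by
      ext j i
      simp [hS, hg, Matrix.one_apply, eq_comm]
    have h2 := RingHom.map_det (evalRingHom (0 : ℂ)) S
    rw [this, Matrix.det_one] at h2
    simpa using h2
  have hdet : S.det ≠ 0 := by
    intro h; simp [h] at hdet0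
  have hu0 : ∀ i, (u i).eval 0 = 0 := by
    intro i
    simp [u, Matrix.mulVec, dotProduct, eval_finsetSum, hv, hx0]
  have hSu : ∀ t j, ∑ i, (S j i).eval t * (u i).eval t = S.det.eval t * (v j).eval t := by
    intro t j
    have : S.mulVec u = S.det • v := by
      simp [u, Matrix.mulVec_mulVec, Matrix.mul_adjugate, Matrix.smul_mulVec]
    have := congrArg (eval t) (congrFun this j)
    simpa [Matrix.mulVec, dotProduct, eval_finsetSum] using this
  have hpV : ∀ i, p.coeff i ∈ V := by
    intro i
    simp only [p, φ, coeff_sub, finsetSum_coeff, coeff_mul_C, coeff_map, ← Algebra.smul_def]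
    exact V.sub_mem (V.smul_mem _ hxV) (V.sum_mem fun j _ => V.smul_mem _ (hWV (w j).2))
  have hptV : ∀ t, p.eval (algebraMap ℂ A t) ∈ V := by
    intro t
    rw [hp]
    exact V.sub_mem (V.smul_mem _ hxV) (V.sum_mem fun j _ => V.smul_mem _ (hWV (w j).2))
  have hp0 : p.coeff 0 = x := by
    have := hp 0
    rw [map_zero] at this
    rw [coeff_zero_eq_eval_zero, this]
    simp [hdet0, hu0]
  -- a complex polynomial whose nonvanishing guarantees `(L + t M) ^ d ≠ 0`
  obtain ⟨f, hf⟩ : ∃ f : Dual ℂ A, f (L ^ d) ≠ 0 := by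
    by_contra! h
    exact hLd ((Module.forall_dual_apply_eq_zero_iff ℂ _).1 h)
  let b : ℂ[X] := S.det * applyCoeff f (Lt ^ d)
  have hb : b ≠ 0 := by
    refine mul_ne_zero hdet fun h => hf ?_
    have := applyCoeff_eval f (Lt ^ d) 0
    rw [h, eval_pow, hLt] at this
    simpa using this.symm
  have key : ∀ t, b.eval t ≠ 0 → IsGeneral V d m (L + algebraMap ℂ A t * M) ∧
      p.eval (algebraMap ℂ A t) ∈ lefKer V m (L + algebraMap ℂ A t * M) := by
    intro t ht
    simp only [b, eval_mul, applyCoeff_eval, eval_pow, hLt] at ht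
    have hd1 : S.det.eval t ≠ 0 := left_ne_zero_of_mul ht
    set N := L + algebraMap ℂ A t * M with hN
    have hNV : N ∈ V := V.add_mem hLV (by rw [← Algebra.smul_def]; exact V.smul_mem _ hM)
    have hNd : N ^ d ≠ 0 := by
      intro h; simp [h] at ht
    -- `R ∘ N ^ m` is injective on `W`, so `W` still complements the kernel of `N ^ m`
    have hinj : ∀ y ∈ W, (∀ j, g j (N ^ m * y) = 0) → y = 0 := by
      intro y hy hgy
      let c := w.repr ⟨y, hy⟩
      have hyc : y = ∑ i, c i • (w i : A) := by
        have := congrArg Subtype.val (w.sum_repr ⟨y, hy⟩)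
        rw [Submodule.coe_sum] at this
        exact this.symm
      let St : Matrix (Fin r) (Fin r) ℂ := (evalRingHom t).mapMatrix S
      have hStdet : St.det ≠ 0 := by
        have h2 := RingHom.map_det (evalRingHom t) S
        rw [show St.det = S.det.eval t from by simpa [St] using h2.symm]
        exact hd1
      have hSc : St.mulVec (fun i => c i) = 0 := by
        ext j
        have := hgy j
        rw [hyc, Finset.mul_sum, map_sum] at this
        simp only [mul_smul_comm, map_smul, smul_eq_mul] at this
        simp only [Matrix.mulVec, dotProduct, Pi.zero_apply, St, RingHom.mapMatrix_apply,
          Matrix.map_apply, coe_evalRingHom, hS, ← hN]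
        rw [← this]
        exact Finset.sum_congr rfl fun i _ => mul_comm _ _
      have hc := Matrix.eq_zero_of_mulVec_eq_zero hStdet hSc
      rw [hyc]
      exact Finset.sum_eq_zero fun i _ => by rw [show c i = 0 from congrFun hc i, zero_smul]
    have hdN : Disjoint (lefKer V m N) W := by
      rw [Submodule.disjoint_def]
      intro y hy hyW
      exact hinj y hyW fun j => by rw [(mem_lefKer.1 hy).2, map_zero]
    have hle : lefKer V m N ⊔ W ≤ V := sup_le inf_le_left hWV
    have e1 := Submodule.finrank_sup_add_finrank_inf_eq (lefKer V m N) W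
    have e2 := Submodule.finrank_sup_add_finrank_inf_eq (lefKer V m L) W
    rw [hdN.eq_bot, finrank_bot] at e1
    rw [hdisj.eq_bot, finrank_bot, hsup] at e2
    have e3 := Submodule.finrank_mono hle
    have hgen : IsGeneral V d m N :=
      ⟨hNV, hNd, fun L' hL' h' => le_trans (by omega) (hmin L' hL' h')⟩
    refine ⟨hgen, mem_lefKer.2 ⟨hptV t, ?_⟩⟩
    have e4 := hmin N hNV hNd
    have hVeq : lefKer V m N ⊔ W = V := Submodule.eq_of_le_of_finrank_eq hle (by omega)
    obtain ⟨k, hk, y, hy, hky⟩ := Submodule.mem_sup.1 (hVeq.symm ▸ hptV t)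
    have hNp : N ^ m * p.eval (algebraMap ℂ A t) = N ^ m * y := by
      rw [← hky, mul_add, (mem_lefKer.1 hk).2, zero_add]
    have hy0 : y = 0 := by
      refine hinj y hy fun j => ?_
      rw [← hNp, hp, mul_sub, map_sub, Finset.mul_sum, map_sum]
      simp only [mul_smul_comm, map_smul, smul_eq_mul]
      rw [sub_eq_zero, ← hv, ← hSu]
      exact Finset.sum_congr rfl fun i _ => by rw [hS, mul_comm]
    rw [hNp, hy0, mul_zero]
  refine ⟨p, hpV, hp0, ?_, fun E hE => ?_⟩
  · refine eq_zero_of_generic _ b hb fun t ht => ?_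
    have := (mem_lefKer.1 (key t ht).2).2
    rw [eval_mul, eval_pow]
    rw [← this, ← hLt]
  · exact eq_zero_of_generic _ b hb fun t ht => hE t (key t ht).1 (key t ht).2

end Curves

/-! ### Polarization and linear relations -/

section Algebra
open Polynomial

lemma coeff_linear_mul_zero {A : Type*} [CommRing A] (L M : A) (q : A[X]) :
    ((C L + X * C M) * q).coeff 0 = L * q.coeff 0 := by
  simp [add_mul, mul_assoc]

lemma coeff_linear_mul_succ {A : Type*} [CommRing A] (L M : A) (q : A[X]) (k : ℕ) :
    ((C L + X * C M) * q).coeff (k + 1) = L * q.coeff (k + 1) + M * q.coeff k := by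
  simp [add_mul, mul_assoc, coeff_X_mul]

variable {A : Type*} [CommRing A] [Algebra ℂ A]

lemma natCast_mul_cancel {n : ℕ} (hn : n ≠ 0) {u : A} (h : (n : A) * u = 0) : u = 0 := by
  have h2 : (n : ℂ) • u = 0 := by rw [Algebra.smul_def, map_natCast, h]
  exact (smul_eq_zero.1 h2).resolve_left (by exact_mod_cast hn)

lemma scalar_eq_zero {c : ℂ} {u : A} (hu : u ≠ 0) (h : algebraMap ℂ A c * u = 0) : c = 0 := by
  rw [← Algebra.smul_def] at h
  exact (smul_eq_zero.1 h).resolve_right hu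

/-- Five vectors in a space of dimension at most four are linearly dependent. -/
lemma exists_relation [FiniteDimensional ℂ A] {V : Submodule ℂ A} (hV : finrank ℂ V ≤ 4)
    {v₁ v₂ v₃ v₄ v₅ : A} (h₁ : v₁ ∈ V) (h₂ : v₂ ∈ V) (h₃ : v₃ ∈ V) (h₄ : v₄ ∈ V) (h₅ : v₅ ∈ V) :
    ∃ a b c e f : ℂ, algebraMap ℂ A a * v₁ + algebraMap ℂ A b * v₂ + algebraMap ℂ A c * v₃
      + algebraMap ℂ A e * v₄ + algebraMap ℂ A f * v₅ = 0 ∧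
      ¬ (a = 0 ∧ b = 0 ∧ c = 0 ∧ e = 0 ∧ f = 0) := by
  let v : Fin 5 → V := ![⟨v₁, h₁⟩, ⟨v₂, h₂⟩, ⟨v₃, h₃⟩, ⟨v₄, h₄⟩, ⟨v₅, h₅⟩]
  have hv : ¬ LinearIndependent ℂ v := by
    intro h
    have := h.fintype_card_le_finrank
    simp at this
    omega
  obtain ⟨g, hg, i, hi⟩ := Fintype.not_linearIndependent_iff.1 hv
  refine ⟨g 0, g 1, g 2, g 3, g 4, ?_, ?_⟩
  · have := congrArg Subtype.val hg
    simpa [Fin.sum_univ_five, v, Algebra.smul_def] using this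
  · rintro ⟨a0, a1, a2, a3, a4⟩
    fin_cases i <;> simp_all

/-- If `L ^ k * e = 0` for all `L` of degree one, then `e` kills everything of degree `k`. -/
lemma polarization (𝒜 : ℕ → Submodule ℂ A) [GradedAlgebra 𝒜]
    (hstd : ∀ i : ℕ, 𝒜 (i + 1) = 𝒜 1 * 𝒜 i) (k : ℕ) :
    ∀ e : A, (∀ L ∈ 𝒜 1, L ^ k * e = 0) → ∀ w ∈ 𝒜 k, w * e = 0 := by
  induction k with
  | zero =>
    intro e he w _
    have := he 0 (𝒜 1).zero_mem
    rw [pow_zero, one_mul] at this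
    rw [this, mul_zero]
  | succ k ih =>
    intro e he w hw
    have step : ∀ L ∈ 𝒜 1, ∀ M ∈ 𝒜 1, L ^ k * (M * e) = 0 := by
      intro L hL M hM
      have hq : (C L + X * C M) ^ (k + 1) * C e = 0 := by
        refine eq_zero_of_generic _ 1 one_ne_zero fun t _ => ?_
        have : L + algebraMap ℂ A t * M ∈ 𝒜 1 :=
          (𝒜 1).add_mem hL (by rw [← Algebra.smul_def]; exact (𝒜 1).smul_mem _ hM)
        simpa only [eval_mul, eval_pow, eval_add, eval_C, eval_X] using he _ this
      have hc : ((C L + X * C M) ^ (k + 1) * C e).derivative.eval 0 = 0 := by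
        rw [hq]; simp
      simp [derivative_pow] at hc
      have h2 : ((k : ℂ) + 1) • (L ^ k * (M * e)) = 0 := by
        rw [Algebra.smul_def]; push_cast [map_add, map_natCast, map_one]
        linear_combination hc
      exact (smul_eq_zero.1 h2).resolve_left (by exact_mod_cast k.succ_ne_zero)
    rw [hstd] at hw
    induction hw using Submodule.mul_induction_on' with
    | mem_mul_mem m hm n hn =>
      have := ih (m * e) (fun L hL => step L hL m hm) n hn
      linear_combination this
    | add a _ b _ ha hb => rw [add_mul, ha, hb, add_zero]

/-! ### Socle degree three -/

/-- In the proof `p = x + t y + t² z + t³ u + …` is a kernel curve in a direction `M` with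
`M ^ 2 * x ≠ 0`; each coefficient of a relation among `x, y, L, M, z` is shown to vanish by
multiplying the relation by an element that sends it to a multiple of `M ^ 2 * x`. -/
lemma lefKer_eq_bot_three [FiniteDimensional ℂ A] (𝒜 : ℕ → Submodule ℂ A) [GradedAlgebra 𝒜]
    (hcodim : finrank ℂ (𝒜 1) ≤ 4)
    (hnd : ∀ k ≤ 3, ∀ e ∈ 𝒜 k, (∀ N ∈ 𝒜 1, N ^ (3 - k) * e = 0) → e = 0)
    {L : A} (hL : IsGeneral (𝒜 1) 3 1 L) : lefKer (𝒜 1) 1 L = ⊥ := by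
  -- the square of the kernel vanishes
  have hsq : ∀ L : A, IsGeneral (𝒜 1) 3 1 L → ∀ x ∈ lefKer (𝒜 1) 1 L, x * x = 0 := by
    intro L hL x hx
    have hx' := mem_lefKer.1 hx
    refine hnd 2 (by norm_num) _ (SetLike.mul_mem_graded hx'.1 hx'.1) fun M hM => ?_
    obtain ⟨p, -, hp0, hp, -⟩ := exists_kernel_curve hL hM hx
    rw [pow_one] at hp
    have e1 := congrArg (coeff · 1) hp
    simp only [coeff_linear_mul_succ, coeff_zero, zero_add, hp0] at e1
    have e2 := hx'.2
    rw [pow_one] at e2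
    norm_num
    linear_combination x * e1 - p.coeff 1 * e2
  rw [Submodule.eq_bot_iff]
  intro x hx
  by_contra hx0
  have hx' := mem_lefKer.1 hx
  have hLx := hx'.2
  rw [pow_one] at hLx
  obtain ⟨M, hM, hMx⟩ : ∃ M ∈ 𝒜 1, M ^ 2 * x ≠ 0 := by
    by_contra! h
    exact hx0 (hnd 1 (by norm_num) x hx'.1 h)
  obtain ⟨p, hpV, hp0, hp, htr⟩ := exists_kernel_curve hL hM hx
  have hpp : p * p = 0 := htr _ fun t ht hpt => by simpa using hsq _ ht _ hpt
  rw [pow_one] at hp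
  have l1 := congrArg (coeff · 1) hp
  have l2 := congrArg (coeff · 2) hp
  have l3 := congrArg (coeff · 3) hp
  simp only [coeff_linear_mul_succ, coeff_zero, zero_add, hp0, Nat.reduceAdd] at l1 l2 l3
  have s0 := congrArg (coeff · 0) hpp
  have s1 := congrArg (coeff · 1) hpp
  have s2 := congrArg (coeff · 2) hpp
  have s3 := congrArg (coeff · 3) hpp
  simp [coeff_mul, Finset.Nat.antidiagonal_succ, hp0] at s0 s1 s2 s3
  have hyV := hpV 1
  have hzV := hpV 2
  generalize p.coeff 1 = y at *
  generalize p.coeff 2 = z at *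
  generalize p.coeff 3 = u at *
  have t1 : M * y * y = 0 := natCast_mul_cancel (n := 3) (by norm_num) (by
    push_cast; linear_combination M * s2 - 2 * z * l1 + 2 * y * l2)
  have t2 : M * x * z = 0 := natCast_mul_cancel (n := 2) (by norm_num) (by
    push_cast; linear_combination M * s2 - t1)
  have t3 : M * y * z = 0 := natCast_mul_cancel (n := 4) (by norm_num) (by
    push_cast; linear_combination 2 * y * l3 - 2 * u * l1 + M * s3)
  have hxy : x * y = 0 := natCast_mul_cancel (n := 2) (by norm_num) (by
    push_cast; linear_combination s1)
  have hxx := hsq L hL x hx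
  obtain ⟨a, b, c, e, f, hrel, hne⟩ := exists_relation hcodim hx'.1 hyV hL.1 hM hzV
  have he : e = 0 := scalar_eq_zero hMx (by
    linear_combination x * M * hrel - M * algebraMap ℂ A a * hxx - M * algebraMap ℂ A b * hxy
      - algebraMap ℂ A c * M * hLx - algebraMap ℂ A f * t2)
  subst he
  rw [map_zero, zero_mul, add_zero] at hrel
  have hc : c = 0 := scalar_eq_zero hMx (by
    linear_combination - y * M * hrel + M * algebraMap ℂ A a * hxy + algebraMap ℂ A b * t1
      + algebraMap ℂ A c * M * l1 + algebraMap ℂ A f * t3)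
  subst hc
  rw [map_zero, zero_mul, add_zero] at hrel
  have hf : f = 0 := scalar_eq_zero hMx (by
    linear_combination L ^ 2 * hrel - algebraMap ℂ A a * L * hLx
      - algebraMap ℂ A b * (L * l1 - M * hLx) - algebraMap ℂ A f * (L * l2 - M * l1))
  subst hf
  rw [map_zero, zero_mul, add_zero] at hrel
  have hb : b = 0 := scalar_eq_zero hMx (by
    linear_combination - L * M * hrel + algebraMap ℂ A a * M * hLx + algebraMap ℂ A b * M * l1)
  subst hb
  rw [map_zero, zero_mul, add_zero] at hrel
  exact hne ⟨scalar_eq_zero hx0 hrel, rfl, rfl, rfl, rfl⟩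


/-! ### Socle degree four -/

/-- First-order relations satisfied by a kernel vector `x` in socle degree four; `y` is the
derivative of a kernel curve through `x` in the direction `M`. -/
lemma four_relations [FiniteDimensional ℂ A] (𝒜 : ℕ → Submodule ℂ A) [GradedAlgebra 𝒜]
    (hnd : ∀ k ≤ 4, ∀ e ∈ 𝒜 k, (∀ N ∈ 𝒜 1, N ^ (4 - k) * e = 0) → e = 0)
    {L x : A} (hL : IsGeneral (𝒜 1) 4 2 L) (hx : x ∈ lefKer (𝒜 1) 2 L) :
    L * (x * x) = 0 ∧ x * x * x = 0 ∧ ∀ M ∈ 𝒜 1, ∃ y ∈ 𝒜 1,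
      L ^ 2 * y + 2 * L * M * x = 0 ∧ 2 * L * x * y + x * x * M = 0 ∧ x * x * y = 0 := by
  have hA : ∀ L : A, IsGeneral (𝒜 1) 4 2 L → ∀ x ∈ lefKer (𝒜 1) 2 L, ∀ y ∈ lefKer (𝒜 1) 2 L,
      L * (x * y) = 0 := by
    intro L hL x hx y hy
    have hx' := mem_lefKer.1 hx
    have hy' := mem_lefKer.1 hy
    refine hnd 3 (by norm_num) _ (SetLike.mul_mem_graded hL.1
      (SetLike.mul_mem_graded hx'.1 hy'.1)) fun M hM => ?_
    obtain ⟨p, -, hp0, hp, -⟩ := exists_kernel_curve hL hM hx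
    rw [pow_two, mul_assoc] at hp
    have e1 := congrArg (coeff · 1) hp
    simp only [coeff_linear_mul_succ, coeff_linear_mul_zero, coeff_zero, zero_add, hp0] at e1
    refine natCast_mul_cancel (n := 2) (by norm_num) ?_
    push_cast
    linear_combination y * e1 - p.coeff 1 * hy'.2
  have hC : ∀ L : A, IsGeneral (𝒜 1) 4 2 L → ∀ x ∈ lefKer (𝒜 1) 2 L, x * x * x = 0 := by
    intro L hL x hx
    have hx' := mem_lefKer.1 hx
    -- along the direction `x` itself the derivative of the curve stays in the kernel
    obtain ⟨p, hpV, hp0, hp, htr⟩ := exists_kernel_curve hL hx'.1 hx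
    have hB : (C L + X * C x) * (p * p) = 0 := htr _ fun t ht hpt => by
      simpa only [eval_mul, eval_add, eval_C, eval_X] using hA _ ht _ hpt _ hpt
    rw [pow_two, mul_assoc] at hp
    have e1 := congrArg (coeff · 1) hp
    simp only [coeff_linear_mul_succ, coeff_linear_mul_zero, coeff_zero, zero_add, hp0] at e1
    have b1 := congrArg (coeff · 1) hB
    simp only [coeff_linear_mul_succ, coeff_zero, zero_add] at b1
    simp [coeff_mul, Finset.Nat.antidiagonal_succ, hp0] at b1
    have a0 := hA L hL x hx x hx
    have hy : p.coeff 1 ∈ lefKer (𝒜 1) 2 L :=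
      mem_lefKer.2 ⟨hpV 1, by linear_combination e1 - 2 * a0⟩
    linear_combination b1 - 2 * hA L hL x hx _ hy
  refine ⟨hA L hL x hx x hx, hC L hL x hx, fun M hM => ?_⟩
  obtain ⟨p, hpV, hp0, hp, htr⟩ := exists_kernel_curve hL hM hx
  have hB : (C L + X * C M) * (p * p) = 0 := htr _ fun t ht hpt => by
    simpa only [eval_mul, eval_add, eval_C, eval_X] using hA _ ht _ hpt _ hpt
  have hD : p * p * p = 0 := htr _ fun t ht hpt => by
    simpa only [eval_mul] using hC _ ht _ hpt
  rw [pow_two, mul_assoc] at hp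
  have e1 := congrArg (coeff · 1) hp
  simp only [coeff_linear_mul_succ, coeff_linear_mul_zero, coeff_zero, zero_add, hp0] at e1
  have b1 := congrArg (coeff · 1) hB
  simp only [coeff_linear_mul_succ, coeff_zero, zero_add] at b1
  simp [coeff_mul, Finset.Nat.antidiagonal_succ, hp0] at b1
  have d1 := congrArg (coeff · 1) hD
  simp [coeff_mul, Finset.Nat.antidiagonal_succ, hp0] at d1
  refine ⟨p.coeff 1, hpV 1, by linear_combination e1, by linear_combination b1,
    natCast_mul_cancel (n := 3) (by norm_num) ?_⟩
  push_cast
  linear_combination d1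

/-- If `x * x ≠ 0`, then some `M ^ 2 * (x * x) ≠ 0`; with `y` the derivative of `x` in the
direction `M` and `z` its derivative in the direction `y`, the vectors `x, L, M, y, z` are linearly
independent. -/
lemma four_sq_eq_zero [FiniteDimensional ℂ A] (𝒜 : ℕ → Submodule ℂ A) [GradedAlgebra 𝒜]
    (hcodim : finrank ℂ (𝒜 1) ≤ 4)
    (hnd : ∀ k ≤ 4, ∀ e ∈ 𝒜 k, (∀ N ∈ 𝒜 1, N ^ (4 - k) * e = 0) → e = 0)
    {L x : A} (hL : IsGeneral (𝒜 1) 4 2 L) (hx : x ∈ lefKer (𝒜 1) 2 L) : x * x = 0 := by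
  have hx' := mem_lefKer.1 hx
  obtain ⟨hLxx, hxxx, hder⟩ := four_relations 𝒜 hnd hL hx
  refine hnd 2 (by norm_num) _ (SetLike.mul_mem_graded hx'.1 hx'.1) fun M hM => ?_
  by_contra hMxx
  norm_num at hMxx
  obtain ⟨y, hy, y1, y2, y3⟩ := hder M hM
  obtain ⟨z, hz, z1, z2, z3⟩ := hder y hy
  have hLx := hx'.2
  obtain ⟨a, b, c, e, f, hrel, hne⟩ := exists_relation hcodim hx'.1 hL.1 hM hy hz
  have hc : c = 0 := scalar_eq_zero hMxx (by
    linear_combination x * x * M * hrel - algebraMap ℂ A a * M * hxxx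
      - algebraMap ℂ A b * M * hLxx - algebraMap ℂ A e * M * y3 - algebraMap ℂ A f * M * z3)
  subst hc
  have hb : b = 0 := scalar_eq_zero hL.2.1 (by
    linear_combination L ^ 3 * hrel - algebraMap ℂ A a * L * hLx
      - algebraMap ℂ A e * (L * y1 - 2 * M * hLx) - algebraMap ℂ A f * (L * z1 - 2 * y * hLx)
      - L ^ 3 * M * (map_zero (algebraMap ℂ A)))
  subst hb
  rw [map_zero, zero_mul, zero_mul, add_zero, add_zero] at hrel
  have he : e = 0 := scalar_eq_zero hMxx (by
    linear_combination - 2 * L * x * M * hrel + 2 * algebraMap ℂ A a * M * hLxx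
      + algebraMap ℂ A e * M * y2 + algebraMap ℂ A f * M * (z2 - y3))
  subst he
  rw [map_zero, zero_mul, add_zero] at hrel
  have hf : f = 0 := scalar_eq_zero hMxx (by
    linear_combination L ^ 2 * M * hrel - algebraMap ℂ A a * M * hLx
      - algebraMap ℂ A f * M * (z1 - y2))
  subst hf
  rw [map_zero, zero_mul, add_zero] at hrel
  refine hne ⟨scalar_eq_zero (fun h => hMxx (by rw [h]; ring)) hrel, rfl, rfl, rfl, rfl⟩

/-- In the first part `p = x + t y + t² z + t³ u + t⁴ v + t⁵ w + …` is a kernel curve in a direction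
`M` with `M ^ 2 * (L * x) ≠ 0`, and each coefficient of a relation among `x, y, L, M, z` vanishes
because the relation can be multiplied into a multiple of `M ^ 2 * (L * x)`. -/
lemma lefKer_eq_bot_four [FiniteDimensional ℂ A] (𝒜 : ℕ → Submodule ℂ A) [GradedAlgebra 𝒜]
    (hcodim : finrank ℂ (𝒜 1) ≤ 4)
    (hnd : ∀ k ≤ 4, ∀ e ∈ 𝒜 k, (∀ N ∈ 𝒜 1, N ^ (4 - k) * e = 0) → e = 0)
    {L : A} (hL : IsGeneral (𝒜 1) 4 2 L) : lefKer (𝒜 1) 2 L = ⊥ := by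
  -- a general element annihilates its kernel vectors
  have hann : ∀ L : A, IsGeneral (𝒜 1) 4 2 L → ∀ x ∈ lefKer (𝒜 1) 2 L, L * x = 0 := by
    intro L hL x hx
    have hx' := mem_lefKer.1 hx
    have hLx := hx'.2
    refine hnd 2 (by norm_num) _ (SetLike.mul_mem_graded hL.1 hx'.1) fun M hM => ?_
    by_contra hMLx
    norm_num at hMLx
    obtain ⟨p, hpV, hp0, hp, htr⟩ := exists_kernel_curve hL hM hx
    have hpp : p * p = 0 := htr _ fun t ht hpt => by
      simpa only [eval_mul] using four_sq_eq_zero 𝒜 hcodim hnd ht hpt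
    rw [pow_two, mul_assoc] at hp
    have l1 := congrArg (coeff · 1) hp
    have l2 := congrArg (coeff · 2) hp
    have l3 := congrArg (coeff · 3) hp
    have l4 := congrArg (coeff · 4) hp
    simp only [coeff_linear_mul_succ, coeff_linear_mul_zero, coeff_zero, zero_add, hp0,
      Nat.reduceAdd] at l1 l2 l3 l4
    have s0 := congrArg (coeff · 0) hpp
    have s1 := congrArg (coeff · 1) hpp
    have s5 := congrArg (coeff · 5) hpp
    simp [coeff_mul, Finset.Nat.antidiagonal_succ, hp0] at s0 s1 s5
    have hyV := hpV 1
    have hzV := hpV 2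
    generalize p.coeff 1 = y at *
    generalize p.coeff 2 = z at *
    generalize p.coeff 3 = u at *
    generalize p.coeff 4 = v at *
    generalize p.coeff 5 = w at *
    have hxy : x * y = 0 := natCast_mul_cancel (n := 2) (by norm_num) (by
      push_cast; linear_combination s1)
    have t1 : L * M * x * z = 0 := natCast_mul_cancel (n := 2) (by norm_num) (by
      push_cast; linear_combination x * l3 - u * hLx - M ^ 2 * hxy)
    have t2 : x * z * u = 0 := natCast_mul_cancel (n := 2) (by norm_num) (by
      push_cast; linear_combination x * s5 - 2 * v * hxy - 2 * w * s0)
    have t3 : 2 * L * M * x * u + M ^ 2 * x * z = 0 := by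
      linear_combination x * l4 - v * hLx
    obtain ⟨a, b, c, e, f, hrel, hne⟩ := exists_relation hcodim hx'.1 hyV hL.1 hM hzV
    have he : e = 0 := scalar_eq_zero hMLx (by
      linear_combination x * L * M * hrel - L * M * algebraMap ℂ A a * s0
        - L * M * algebraMap ℂ A b * hxy - algebraMap ℂ A c * M * hLx - algebraMap ℂ A f * t1)
    subst he
    rw [map_zero, zero_mul, add_zero] at hrel
    have r1 : algebraMap ℂ A c * (L * x) + algebraMap ℂ A f * (x * z) = 0 := by
      linear_combination x * hrel - algebraMap ℂ A a * s0 - algebraMap ℂ A b * hxy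
    have hc : c * c = 0 := scalar_eq_zero hMLx (by
      rw [map_mul]
      linear_combination algebraMap ℂ A c * M ^ 2 * r1 - algebraMap ℂ A c * algebraMap ℂ A f * t3
        + 2 * algebraMap ℂ A f * M * u * r1 - 2 * (algebraMap ℂ A f) ^ 2 * M * t2)
    replace hc := mul_self_eq_zero.1 hc
    subst hc
    rw [map_zero, zero_mul, add_zero] at hrel
    have hf : f = 0 := scalar_eq_zero hMLx (natCast_mul_cancel (n := 3) (by norm_num) (by
      push_cast
      linear_combination L ^ 3 * hrel - algebraMap ℂ A a * L * hLx
        - algebraMap ℂ A b * (L * l1 - 2 * M * hLx)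
        - algebraMap ℂ A f * (L * l2 - 2 * M * l1)))
    subst hf
    rw [map_zero, zero_mul, add_zero] at hrel
    have hb : b = 0 := scalar_eq_zero hMLx (natCast_mul_cancel (n := 2) (by norm_num) (by
      push_cast
      linear_combination - L ^ 2 * M * hrel + algebraMap ℂ A a * M * hLx
        + algebraMap ℂ A b * M * l1))
    subst hb
    rw [map_zero, zero_mul, add_zero] at hrel
    exact hne ⟨scalar_eq_zero (fun h => hMLx (by rw [h]; ring)) hrel, rfl, rfl, rfl, rfl⟩
  rw [Submodule.eq_bot_iff]
  intro x hx
  have hx' := mem_lefKer.1 hx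
  refine hnd 1 (by norm_num) x hx'.1 fun M hM => ?_
  obtain ⟨p, hpV, hp0, hp, htr⟩ := exists_kernel_curve hL hM hx
  have hLp : (C L + X * C M) * p = 0 := htr _ fun t ht hpt => by
    simpa only [eval_mul, eval_add, eval_C, eval_X] using hann _ ht _ hpt
  have l1 := congrArg (coeff · 1) hLp
  simp only [coeff_linear_mul_succ, coeff_zero, zero_add, hp0] at l1
  have hLx := hann L hL x hx
  have hy := hann L hL (p.coeff 1)
    (mem_lefKer.2 ⟨hpV 1, by linear_combination L * l1 - M * hLx⟩)
  norm_num
  linear_combination M ^ 2 * l1 - M ^ 2 * hy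

end Algebra

/-! ### The Strong Lefschetz Property -/

/-- **Corollary.** Every standard graded Artinian Gorenstein `ℂ`-algebra
`A = ⊕_{i=0}^d A_i` of codimension `dim_ℂ A_1 ≤ 4` and socle degree `d ∈ {3,4}` has the
Strong Lefschetz Property: there is `L ∈ A_1` such that every multiplication map
`×L^k : A_i → A_{i+k}` with `i + k ≤ d` is injective or surjective. -/
theorem standard_AG_algebra_low_socle_degree_SLP
    (d : ℕ) (hd : d = 3 ∨ d = 4)
    (A : Type*) [CommRing A] [Algebra ℂ A] [FiniteDimensional ℂ A]
    (𝒜 : ℕ → Submodule ℂ A) [GradedAlgebra 𝒜]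
    (hstd : ∀ i : ℕ, 𝒜 (i + 1) = 𝒜 1 * 𝒜 i)
    (htop : ∀ j : ℕ, d < j → 𝒜 j = ⊥)
    (h0 : Module.finrank ℂ (𝒜 0) = 1)
    (hcodim : Module.finrank ℂ (𝒜 1) ≤ 4)
    (hsocle : Module.finrank ℂ (𝒜 d) = 1)
    (hgor : ∀ k : ℕ, k ≤ d → ∀ a ∈ 𝒜 k, a ≠ 0 → ∃ b ∈ 𝒜 (d - k), a * b ≠ 0) :
    ∃ L ∈ 𝒜 1, ∀ i k : ℕ, i + k ≤ d →
      (∀ v ∈ 𝒜 i, L ^ k * v = 0 → v = 0) ∨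
      (∀ w ∈ 𝒜 (i + k), ∃ v ∈ 𝒜 i, L ^ k * v = w) := by
  have hnd : ∀ k ≤ d, ∀ e ∈ 𝒜 k, (∀ N ∈ 𝒜 1, N ^ (d - k) * e = 0) → e = 0 := by
    intro k hk e he h
    by_contra hne
    obtain ⟨b, hb, hbe⟩ := hgor k hk e he hne
    exact hbe (by rw [mul_comm]; exact polarization 𝒜 hstd _ e h b hb)
  obtain ⟨L₀, hL₀, hL₀d⟩ : ∃ L ∈ 𝒜 1, L ^ d ≠ 0 := by
    by_contra! h
    have h1 : (1 : A) = 0 :=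
      hnd 0 (Nat.zero_le _) 1 SetLike.GradedOne.one_mem (fun N hN => by simpa using h N hN)
    have : Subsingleton A := subsingleton_of_zero_eq_one h1.symm
    have := Module.finrank_zero_of_subsingleton (R := ℂ) (M := 𝒜 0)
    omega
  obtain ⟨L, hL⟩ : ∃ L, IsGeneral (𝒜 1) d (d - 2) L := by
    have hex : ∃ n L, L ∈ 𝒜 1 ∧ L ^ d ≠ 0 ∧ finrank ℂ (lefKer (𝒜 1) (d - 2) L) = n :=
      ⟨_, L₀, hL₀, hL₀d, rfl⟩
    classical
    obtain ⟨L, hL, hLd, hn⟩ := Nat.find_spec hex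
    exact ⟨L, hL, hLd, fun L' hL' hL'd => hn ▸ Nat.find_min' hex ⟨L', hL', hL'd, rfl⟩⟩
  have hker : lefKer (𝒜 1) (d - 2) L = ⊥ := by
    rcases hd with rfl | rfl
    · exact lefKer_eq_bot_three 𝒜 hcodim hnd hL
    · exact lefKer_eq_bot_four 𝒜 hcodim hnd hL
  have hLV := hL.1
  have hLd := hL.2.1
  have hLpow : ∀ k, L ^ k ∈ 𝒜 k := fun k => by
    simpa using SetLike.pow_mem_graded k hLV
  have hinj : ∀ k ≤ d - 2, ∀ v ∈ 𝒜 1, L ^ k * v = 0 → v = 0 := by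
    intro k hk v hv h
    have : v ∈ lefKer (𝒜 1) (d - 2) L := mem_lefKer.2 ⟨hv, by
      rw [← Nat.sub_add_cancel hk, pow_add, mul_assoc, h, mul_zero]⟩
    rwa [hker, Submodule.mem_bot] at this
  have hzero : ∀ v ∈ 𝒜 0, ∃ c : ℂ, v = c • (1 : A) := by
    intro v hv
    have h1 : (⟨1, SetLike.GradedOne.one_mem⟩ : 𝒜 0) ≠ 0 := by
      intro h
      have h : (1 : A) = 0 := congrArg Subtype.val h
      exact hLd (by rw [← mul_one (L ^ d), h, mul_zero])
    obtain ⟨c, hc⟩ := (finrank_eq_one_iff_of_nonzero' _ h1).1 h0 ⟨v, hv⟩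
    exact ⟨c, (congrArg Subtype.val hc).symm⟩
  have hsoc : ∀ v ∈ 𝒜 d, ∃ c : ℂ, v = c • L ^ d := by
    intro v hv
    have h1 : (⟨L ^ d, hLpow d⟩ : 𝒜 d) ≠ 0 := fun h => hLd (congrArg Subtype.val h)
    obtain ⟨c, hc⟩ := (finrank_eq_one_iff_of_nonzero' _ h1).1 hsocle ⟨v, hv⟩
    exact ⟨c, (congrArg Subtype.val hc).symm⟩
  -- By duality the injection `L ^ (d - 2) : A_1 → A_(d-1)` is onto.
  have hsurj : ∀ w ∈ 𝒜 (d - 1), ∃ v ∈ 𝒜 1, L ^ (d - 2) * v = w := by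
    obtain ⟨f, hf⟩ : ∃ f : Dual ℂ A, f (L ^ d) ≠ 0 := by
      by_contra! h
      exact hLd ((Module.forall_dual_apply_eq_zero_iff ℂ _).1 h)
    have hfz : ∀ v ∈ 𝒜 d, f v = 0 → v = 0 := by
      intro v hv h
      obtain ⟨c, rfl⟩ := hsoc v hv
      rw [map_smul, smul_eq_mul] at h
      rw [(mul_eq_zero.1 h).resolve_right hf, zero_smul]
    -- `T a` is the functional `b ↦ f (a * b)` on `A_1`
    let T : A →ₗ[ℂ] Dual ℂ (𝒜 1) :=
      (Dual.transpose (R := ℂ) (𝒜 1).subtype).comp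
        ((LinearMap.compRight ℂ f).comp (LinearMap.mul ℂ A))
    have hT : ∀ a (b : 𝒜 1), T a b = f (a * b) := fun a b => rfl
    have hTz : ∀ w ∈ 𝒜 (d - 1), T w = 0 → w = 0 := by
      intro w hw h
      refine hnd (d - 1) (by omega) w hw fun N hN => ?_
      have e1 : d - (d - 1) = 1 := by omega
      rw [e1, pow_one]
      refine hfz _ ?_ ?_
      · have := SetLike.mul_mem_graded hN hw
        rwa [show 1 + (d - 1) = d by omega] at this
      · have := LinearMap.congr_fun h ⟨N, hN⟩
        rw [hT] at this
        rw [mul_comm]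
        exact this
    have hmem : ∀ v ∈ 𝒜 1, L ^ (d - 2) * v ∈ 𝒜 (d - 1) := by
      intro v hv
      have := SetLike.mul_mem_graded (hLpow (d - 2)) hv
      rwa [show d - 2 + 1 = d - 1 by omega] at this
    let Φ : 𝒜 1 →ₗ[ℂ] Dual ℂ (𝒜 1) :=
      T.comp ((LinearMap.mulLeft ℂ (L ^ (d - 2))).comp (𝒜 1).subtype)
    have hΦ : Function.Injective Φ := by
      rw [← LinearMap.ker_eq_bot, LinearMap.ker_eq_bot']
      intro v hv
      exact Subtype.ext (hinj _ le_rfl v v.2 (hTz _ (hmem v v.2) hv))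
    have hΦs : Function.Surjective Φ :=
      (LinearMap.injective_iff_surjective_of_finrank_eq_finrank
        (Subspace.dual_finrank_eq).symm).1 hΦ
    intro w hw
    obtain ⟨v, hv⟩ := hΦs (T w)
    refine ⟨v, v.2, sub_eq_zero.1 (hTz _ ((𝒜 (d - 1)).sub_mem (hmem v v.2) hw) ?_)⟩
    rw [map_sub, sub_eq_zero]
    exact hv
  refine ⟨L, hLV, fun i k hik => ?_⟩
  rcases Nat.eq_zero_or_pos k with rfl | hk
  · exact Or.inl fun v _ h => by simpa using h
  rcases Nat.eq_zero_or_pos i with rfl | hi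
  · refine Or.inl fun v hv h => ?_
    obtain ⟨c, rfl⟩ := hzero v hv
    have hLk : L ^ k ≠ 0 := fun h => hLd (by
      rw [← Nat.sub_add_cancel (show k ≤ d by omega), pow_add, h, mul_zero])
    rw [mul_smul_comm, mul_one] at h
    rw [(smul_eq_zero.1 h).resolve_right hLk, zero_smul]
  rcases Nat.eq_or_lt_of_le hik with h | h
  · refine Or.inr fun w hw => ?_
    rw [h] at hw
    obtain ⟨c, rfl⟩ := hsoc w hw
    exact ⟨c • L ^ i, (𝒜 i).smul_mem _ (hLpow i), by
      rw [mul_smul_comm, ← pow_add, ← h, add_comm]⟩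
  rcases Nat.eq_or_lt_of_le hi with rfl | hi2
  · exact Or.inl (hinj k (by omega))
  -- only `L : A_2 → A_3` in socle degree four remains; it is onto because `L ^ 2 : A_1 → A_3` is
  obtain ⟨rfl, rfl, rfl⟩ : d = 4 ∧ i = 2 ∧ k = 1 := by omega
  refine Or.inr fun w hw => ?_
  obtain ⟨v, hv, rfl⟩ := hsurj w hw
  exact ⟨L * v, SetLike.mul_mem_graded hLV hv, by norm_num; ring⟩
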